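/- For every δ ∈ (0,1) there exist c, C > 0 (depending only on δ) such that the following holds. Let G = (V,E) be a finite simple graph on n vertices with maximum degree at most Δ, where Δ ≥ 3 is an integer, let λ ∈ (0, (1−δ)·λ_Δ], and let μ be the hardcore model on G with uniform fugacity λ. Let κ > 0 and let f : 2^V → ℝ satisfy 0 ≤ f(σ ∪ {v}) − f(σ) ≤ κ for every σ ⊆ V and v ∉ σ. Then: (a) for every t with 0 ≤ t ≤ C·λ·κ·n, both P_μ( f − E_μ[f] > t ) ≤ exp(−c·t²/(λ·κ²·n)) and P_μ( f − E_μ[f] < −t ) ≤ exp(−c·t²/(λ·κ²·n)); and (b) for every t ≥ 0, both P_μ( f − E_μ[f] > t ) ≤ exp(C·λ·n)·exp(−c·t/κ) and P_μ( f − E_μ[f] < −t ) ≤ exp(C·λ·n)·exp(−c·t/κ). -/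

import Mathlib

/-!
The proof bounds the moment generating function: with `K = 1 + 252 / δ`,
`E exp(s (f - E f)) ≤ exp(λ (s K κ)² n)` as long as `|s| K κ ≤ 1` (`mgf_le`). Both regimes follow
from Chernoff's bound (`chernoff`).

*Moment bound.* Vertices are revealed one at a time. Conditionally on `v` being empty or occupied
the law is again a hardcore model, on `G - v` or `G - N[v]`. As `v` is occupied with probability at
most `λ`, one step costs at most `λ (s J)²` in the exponent, where `J` is the difference of the two
conditional means of `f`. So it suffices to bound this influence by `K κ`, on every induced
subgraph (`infl_le`).

*Influence bound.* Passing from `G - v` to `G - N[v]` deletes the neighbours `u₁, …, u_d` of `v`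
successively. Deleting `u_i` moves the mean by `p_i J_i`, where `p_i` is the occupation probability
of `u_i` in the current graph and `J_i` its influence there, whence `J ≤ κ + ∑ p_i J_i`
(`peel`, `infl_step`). The same deletions give the odds `p / (1 - p) = λ ∏ (1 - p_i)` of `v`. This
is the recursion on the tree of self-avoiding walks, and every vertex other than the root has at
most `Δ - 1` children. The quantity `√p J` satisfies `√p J ≤ κ √p + √p ∑ √p_i (√p_i J_i)`, and
below `(1 - δ) λ_Δ` one has `√p ∑ √p_i ≤ 1 - δ / 14` (`tree_contract`). Hence
`√p J ≤ 14 κ √λ / δ` for inner vertices (`infl_inner`), and since `Δ λ ≤ 18` the root satisfies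
`J ≤ κ + (14 / δ) κ Δ λ ≤ K κ`.
-/

open Finset

noncomputable section
attribute [local instance] Classical.propDecidable

variable {V : Type*} [Fintype V] [DecidableEq V]

/-- `σ` is an independent set of `G`: no two of its elements are adjacent. -/
def IndepSet (G : SimpleGraph V) (σ : Finset V) : Prop :=
  ∀ u ∈ σ, ∀ w ∈ σ, ¬ G.Adj u w

/-- Unnormalized hardcore weight of `σ`: `∏_{v ∈ σ} λ_v` if `σ` is independent, else `0`. -/
def hcWeight (G : SimpleGraph V) (lam : V → ℝ) (σ : Finset V) : ℝ :=
  if IndepSet G σ then ∏ v ∈ σ, lam v else 0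

/-- The hardcore model on `G` with fugacities `lam`, as a distribution on `Finset V`. -/
def hardcore (G : SimpleGraph V) (lam : V → ℝ) (σ : Finset V) : ℝ :=
  hcWeight G lam σ / ∑ τ : Finset V, hcWeight G lam τ

/-- The tree-uniqueness threshold `λ_Δ = (Δ−1)^{Δ−1}/(Δ−2)^Δ`. -/
def hcCrit (Δ : ℕ) : ℝ := ((Δ : ℝ) - 1) ^ (Δ - 1) / ((Δ : ℝ) - 2) ^ Δ

/-- Mean of `f` under a distribution `μ` on a finite set. -/
def expect {Ω : Type*} [Fintype Ω] (μ : Ω → ℝ) (f : Ω → ℝ) : ℝ :=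
  ∑ x, μ x * f x

/-- Upper tail probability `P_μ(f − E_μ[f] > t)`. -/
def upperTail {Ω : Type*} [Fintype Ω] (μ : Ω → ℝ) (f : Ω → ℝ) (t : ℝ) : ℝ :=
  ∑ x ∈ univ.filter (fun x => expect μ f + t < f x), μ x

/-- Lower tail probability `P_μ(f − E_μ[f] < −t)`. -/
def lowerTail {Ω : Type*} [Fintype Ω] (μ : Ω → ℝ) (f : Ω → ℝ) (t : ℝ) : ℝ :=
  ∑ x ∈ univ.filter (fun x => f x < expect μ f - t), μ x

set_option linter.unusedSectionVars false

/-! ### Partition sums and averages on vertex subsets -/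

/-- Weighted sum of `g` over the independent sets contained in `U`. With `g = 1` this is the
partition function of the hardcore model on the subgraph induced by `U`. -/
def wsum (G : SimpleGraph V) (lam : ℝ) (U : Finset V) (g : Finset V → ℝ) : ℝ :=
  ∑ σ ∈ U.powerset, hcWeight G (fun _ => lam) σ * g σ

/-- Partition function of the hardcore model on the subgraph induced by `U`. -/
def pfun (G : SimpleGraph V) (lam : ℝ) (U : Finset V) : ℝ := wsum G lam U (fun _ => 1)

/-- Mean of `g` under the hardcore model on the subgraph induced by `U`. -/
def avg (G : SimpleGraph V) (lam : ℝ) (U : Finset V) (g : Finset V → ℝ) : ℝ :=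
  wsum G lam U g / pfun G lam U

/-- Neighbours of `v` inside `U`. -/
def nbr (G : SimpleGraph V) (U : Finset V) (v : V) : Finset V := (U.erase v).filter (G.Adj v)

lemma mem_nbr {G : SimpleGraph V} {U : Finset V} {u v : V} :
    u ∈ nbr G U v ↔ u ∈ U.erase v ∧ G.Adj v u := Finset.mem_filter

/-- The vertices of `U` that remain free once `v` is occupied. -/
def rest (G : SimpleGraph V) (U : Finset V) (v : V) : Finset V := U.erase v \ nbr G U v

/-- Occupation probability of `v` in the hardcore model on the subgraph induced by `U`
(for `v ∈ U`). -/
def occ (G : SimpleGraph V) (lam : ℝ) (U : Finset V) (v : V) : ℝ :=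
  lam * pfun G lam (rest G U v) / pfun G lam U

/-- `g` changes by at most `κ` when one element is added. -/
def Lip (κ : ℝ) (g : Finset V → ℝ) : Prop := ∀ (σ : Finset V) (v : V), |g (insert v σ) - g σ| ≤ κ

lemma Lip.comp_insert {κ : ℝ} {g : Finset V → ℝ} (hg : Lip κ g) (v : V) :
    Lip κ (fun σ => g (insert v σ)) := by
  intro σ w
  have := hg (insert v σ) w
  rwa [Finset.insert_comm] at this

lemma hcWeight_nonneg (G : SimpleGraph V) {lam : ℝ} (hl : 0 < lam) (σ : Finset V) :
    0 ≤ hcWeight G (fun _ => lam) σ := by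
  unfold hcWeight
  split_ifs
  · exact Finset.prod_nonneg fun _ _ => hl.le
  · exact le_rfl

lemma hcWeight_empty (G : SimpleGraph V) (lam : ℝ) : hcWeight G (fun _ => lam) ∅ = 1 := by
  simp [hcWeight, IndepSet]

lemma hcWeight_insert (G : SimpleGraph V) (lam : ℝ) {σ : Finset V} {v : V} (hv : v ∉ σ) :
    hcWeight G (fun _ => lam) (insert v σ) =
      if ∀ u ∈ σ, ¬ G.Adj v u then lam * hcWeight G (fun _ => lam) σ else 0 := by
  unfold hcWeight
  have key : IndepSet G (insert v σ) ↔ (∀ u ∈ σ, ¬ G.Adj v u) ∧ IndepSet G σ := by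
    unfold IndepSet
    constructor
    · intro h
      exact ⟨fun u hu => h v (by simp) u (by simp [hu]),
        fun u hu w hw => h u (by simp [hu]) w (by simp [hw])⟩
    · rintro ⟨h1, h2⟩ u hu w hw
      rcases Finset.mem_insert.1 hu with hu | hu <;> rcases Finset.mem_insert.1 hw with hw | hw
      · rw [hu, hw]; exact G.loopless.irrefl _
      · rw [hu]; exact h1 w hw
      · rw [hw]; exact fun h => h1 u hu h.symm
      · exact h2 u hu w hw
  by_cases h1 : ∀ u ∈ σ, ¬ G.Adj v u <;> by_cases h2 : IndepSet G σ <;>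
    simp [key, h1, h2, Finset.prod_insert hv]

/-- Splitting according to whether `v` is occupied. -/
lemma wsum_rec (G : SimpleGraph V) (lam : ℝ) {U : Finset V} {v : V} (hv : v ∈ U)
    (g : Finset V → ℝ) :
    wsum G lam U g = wsum G lam (U.erase v) g +
      lam * wsum G lam (rest G U v) (fun σ => g (insert v σ)) := by
  conv_lhs => rw [← Finset.insert_erase hv]
  unfold wsum
  rw [Finset.sum_powerset_insert (Finset.notMem_erase v U), Finset.mul_sum]
  congr 1
  symm
  have hsub : (rest G U v).powerset ⊆ (U.erase v).powerset :=
    Finset.powerset_mono.2 Finset.sdiff_subset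
  rw [← Finset.sum_subset_zero_on_sdiff hsub]
  · intro σ hσ
    rw [Finset.mem_sdiff, Finset.mem_powerset, Finset.mem_powerset] at hσ
    rw [hcWeight_insert G lam (fun h => Finset.notMem_erase v U (hσ.1 h)), if_neg, zero_mul]
    intro h
    apply hσ.2
    intro u hu
    simp only [rest, nbr, Finset.mem_sdiff, Finset.mem_filter, not_and]
    exact ⟨hσ.1 hu, fun _ => h u hu⟩
  · intro σ hσ
    rw [Finset.mem_powerset] at hσ
    have hσ' : σ ⊆ U.erase v := hσ.trans Finset.sdiff_subset
    rw [hcWeight_insert G lam (fun h => Finset.notMem_erase v U (hσ' h)), if_pos, mul_assoc]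
    intro u hu h
    have := hσ hu
    simp only [rest, nbr, Finset.mem_sdiff, Finset.mem_filter, not_and] at this
    exact this.2 this.1 h

section
variable {G : SimpleGraph V} {lam : ℝ}

lemma pfun_pos (hl : 0 < lam) (U : Finset V) : 0 < pfun G lam U := by
  unfold pfun wsum
  refine Finset.sum_pos' (fun σ _ => by simpa using hcWeight_nonneg G hl σ)
    ⟨∅, Finset.empty_mem_powerset U, ?_⟩
  simp [hcWeight_empty]

lemma pfun_rec {U : Finset V} {v : V} (hv : v ∈ U) :
    pfun G lam U = pfun G lam (U.erase v) + lam * pfun G lam (rest G U v) :=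
  wsum_rec G lam hv _

lemma occ_pos (hl : 0 < lam) (U : Finset V) (v : V) : 0 < occ G lam U v := by
  have := pfun_pos (G := G) hl U
  have := pfun_pos (G := G) hl (rest G U v)
  unfold occ
  positivity

lemma one_sub_occ (hl : 0 < lam) {U : Finset V} {v : V} (hv : v ∈ U) :
    1 - occ G lam U v = pfun G lam (U.erase v) / pfun G lam U := by
  have h := pfun_pos (G := G) hl U
  have h2 := pfun_rec (G := G) (lam := lam) hv
  unfold occ
  rw [eq_div_iff h.ne', sub_mul, div_mul_cancel₀ _ h.ne']
  linarith

lemma occ_lt_one (hl : 0 < lam) {U : Finset V} {v : V} (hv : v ∈ U) : occ G lam U v < 1 := by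
  have h := one_sub_occ (G := G) hl hv
  have : 0 < pfun G lam (U.erase v) / pfun G lam U := div_pos (pfun_pos hl _) (pfun_pos hl _)
  linarith

lemma pfun_mono (hl : 0 < lam) {U W : Finset V} (h : U ⊆ W) :
    pfun G lam U ≤ pfun G lam W := by
  unfold pfun wsum
  exact Finset.sum_le_sum_of_subset_of_nonneg (Finset.powerset_mono.2 h)
    fun σ _ _ => by simpa using hcWeight_nonneg G hl σ

lemma rest_subset (U : Finset V) (v : V) : rest G U v ⊆ U.erase v := Finset.sdiff_subset

lemma occ_le (hl : 0 < lam) (U : Finset V) (v : V) : occ G lam U v ≤ lam := by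
  unfold occ
  rw [div_le_iff₀ (pfun_pos hl U)]
  exact mul_le_mul_of_nonneg_left
    (pfun_mono hl ((rest_subset U v).trans (Finset.erase_subset v U))) hl.le

lemma avg_rec (hl : 0 < lam) {U : Finset V} {v : V} (hv : v ∈ U) (g : Finset V → ℝ) :
    avg G lam U g = (1 - occ G lam U v) * avg G lam (U.erase v) g +
      occ G lam U v * avg G lam (rest G U v) (fun σ => g (insert v σ)) := by
  rw [one_sub_occ hl hv]
  have h1 := (pfun_pos (G := G) hl U).ne'
  have h2 := (pfun_pos (G := G) hl (U.erase v)).ne'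
  have h3 := (pfun_pos (G := G) hl (rest G U v)).ne'
  unfold avg occ
  rw [wsum_rec G lam hv]
  field_simp

lemma avg_empty (g : Finset V → ℝ) : avg G lam ∅ g = g ∅ := by
  simp [avg, pfun, wsum, hcWeight_empty]

lemma avg_mono (hl : 0 < lam) (U : Finset V) {g h : Finset V → ℝ} (hgh : ∀ σ, g σ ≤ h σ) :
    avg G lam U g ≤ avg G lam U h := by
  unfold avg wsum
  have := pfun_pos (G := G) hl U
  gcongr with σ
  · exact hcWeight_nonneg G hl σ
  · exact hgh σ

lemma avg_add_const (hl : 0 < lam) (U : Finset V) (g : Finset V → ℝ) (c : ℝ) :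
    avg G lam U (fun σ => g σ + c) = avg G lam U g + c := by
  have h := (pfun_pos (G := G) hl U).ne'
  have : wsum G lam U (fun σ => g σ + c) = wsum G lam U g + c * pfun G lam U := by
    simp only [wsum, pfun, Finset.mul_sum, ← Finset.sum_add_distrib]
    exact Finset.sum_congr rfl fun _ _ => by ring
  unfold avg
  rw [this]
  field_simp

/-! ### Influence of one vertex -/

/-- Effect on the mean of `g` of occupying `v` rather than leaving it empty. -/
def infl (G : SimpleGraph V) (lam : ℝ) (U : Finset V) (v : V) (g : Finset V → ℝ) : ℝ :=
  |avg G lam (rest G U v) (fun σ => g (insert v σ)) - avg G lam (U.erase v) g|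

/-- Deleting the vertices of `N` one at a time: the means on `W` and on `W \ N` differ by at most a
weighted sum of influences, and the vacancy probabilities met on the way multiply up to
`Z(W \ N) / Z(W)`. The bound `M / √p` on an influence is the shape propagated by the tree
recursion; multiplied by the weight `p` it contributes `M √p`. -/
lemma peel (hl : 0 < lam) {M : ℝ} {g : Finset V → ℝ} (N : Finset V) :
    ∀ W : Finset V, N ⊆ W →
    (∀ H ⊆ W, ∀ u ∈ N, u ∈ H → infl G lam H u g ≤ M / √(occ G lam H u)) →
    ∃ p : V → ℝ, (∀ u ∈ N, 0 < p u ∧ p u < 1 ∧ p u ≤ lam) ∧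
      ∏ u ∈ N, (1 - p u) = pfun G lam (W \ N) / pfun G lam W ∧
      |avg G lam (W \ N) g - avg G lam W g| ≤ M * ∑ u ∈ N, √(p u) := by
  induction N using Finset.induction_on with
  | empty =>
    intro W _ _
    refine ⟨fun _ => 0, by simp, ?_, by simp⟩
    simp [(pfun_pos (G := G) hl W).ne']
  | insert v N hvN ih =>
    intro W hNW hH
    have hvW : v ∈ W := hNW (Finset.mem_insert_self v N)
    have hNW' : N ⊆ W.erase v := fun u hu =>
      Finset.mem_erase.2 ⟨fun h => hvN (h ▸ hu), hNW (Finset.mem_insert_of_mem hu)⟩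
    obtain ⟨p, hp, hprod, hbd⟩ := ih (W.erase v) hNW' fun H hHW u hu huH =>
      hH H (hHW.trans (Finset.erase_subset v W)) u (Finset.mem_insert_of_mem hu) huH
    have hset : W \ insert v N = W.erase v \ N := by
      ext u; simp only [Finset.mem_sdiff, Finset.mem_insert, Finset.mem_erase]; tauto
    have hcongr : ∀ u ∈ N, Function.update p v (occ G lam W v) u = p u := fun u hu =>
      Function.update_of_ne (by rintro rfl; exact hvN hu) _ _
    refine ⟨Function.update p v (occ G lam W v), ?_, ?_, ?_⟩
    · intro u hu
      rcases Finset.mem_insert.1 hu with rfl | hu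
      · simpa using ⟨occ_pos hl W u, occ_lt_one hl hvW, occ_le hl W u⟩
      · rw [hcongr u hu]; exact hp u hu
    · rw [Finset.prod_insert hvN, Finset.prod_congr rfl fun u hu => by rw [hcongr u hu], hprod,
        Function.update_self, one_sub_occ hl hvW, hset, mul_comm, div_mul_div_cancel₀]
      exact (pfun_pos hl _).ne'
    · rw [Finset.sum_insert hvN, Finset.sum_congr rfl fun u hu => by rw [hcongr u hu],
        Function.update_self, hset]
      have h1 := hH W subset_rfl v (Finset.mem_insert_self v N) hvW
      have h0 := occ_pos (G := G) hl W v
      have h2 : |avg G lam (W.erase v) g - avg G lam W g| ≤ M * √(occ G lam W v) := by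
        have : avg G lam (W.erase v) g - avg G lam W g = - (occ G lam W v *
            (avg G lam (rest G W v) (fun σ => g (insert v σ)) - avg G lam (W.erase v) g)) := by
          rw [avg_rec hl hvW]; ring
        rw [this, abs_neg, abs_mul, abs_of_pos h0]
        calc _ ≤ occ G lam W v * (M / √(occ G lam W v)) := mul_le_mul_of_nonneg_left h1 h0.le
          _ = M * √(occ G lam W v) := by
            have := Real.sqrt_pos.2 h0
            nth_rewrite 1 [← Real.mul_self_sqrt h0.le]
            field_simp
      calc _ ≤ _ := abs_sub_le _ (avg G lam (W.erase v) g) _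
        _ ≤ _ := by rw [mul_add]; linarith

/-! ### Contraction of the tree recursion below the uniqueness threshold -/

/-- The extremal case is `p u = 1 / d` for all `u`, with `d` indices. Every factor `x`, normalized
to equal `1` in that case, is bounded by `exp (x - 1)`; the exponents cancel. The `d - |N|` missing
indices are treated as factors with `p = 0`. -/
lemma prod_mul_le {ι : Type*} (N : Finset ι) (p : ι → ℝ) (hp : ∀ u ∈ N, 0 < p u ∧ p u < 1)
    {d : ℕ} (hd : 2 ≤ d) (hN : N.card ≤ d) :
    (∏ u ∈ N, (1 - p u)) * (d * ∑ u ∈ N, p u - 1) ≤ ((d : ℝ) - 1) ^ (d + 1) / (d : ℝ) ^ d := by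
  have hd' : (2 : ℝ) ≤ d := by exact_mod_cast hd
  have hd1 : (0 : ℝ) < d - 1 := by linarith
  have hd0 : (0 : ℝ) < d := by linarith
  set S := ∑ u ∈ N, p u with hS
  have hP : 0 ≤ ∏ u ∈ N, (1 - p u) := Finset.prod_nonneg fun u hu => by linarith [(hp u hu).2]
  rcases le_or_gt ((d : ℝ) * S - 1) 0 with hneg | hpos
  · exact (mul_nonpos_of_nonneg_of_nonpos hP hneg).trans (by positivity)
  set q : ℝ := (d - 1) / d with hq
  have hq0 : 0 < q := by positivity
  have h1 : ∏ u ∈ N, (1 - p u) ≤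
      q ^ N.card * Real.exp (∑ u ∈ N, ((1 - p u) * (d / (d - 1)) - 1)) := by
    rw [Real.exp_sum, ← Finset.prod_const, ← Finset.prod_mul_distrib]
    refine Finset.prod_le_prod (fun u hu => by linarith [(hp u hu).2]) fun u hu => ?_
    have := Real.add_one_le_exp ((1 - p u) * (d / (d - 1)) - 1)
    calc 1 - p u = q * ((1 - p u) * (d / (d - 1))) := by rw [hq]; field_simp
      _ ≤ _ := mul_le_mul_of_nonneg_left (by linarith) hq0.le
  obtain ⟨k, hk⟩ := Nat.exists_eq_add_of_le hN
  have hkd : (k : ℝ) = d - N.card := by rw [hk]; push_cast; ring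
  have h2 : q ^ N.card ≤ q ^ d * Real.exp (k * (1 / (d - 1))) := by
    have hstep : (1 : ℝ) ≤ q * Real.exp (1 / (d - 1)) := by
      have := Real.add_one_le_exp (1 / ((d : ℝ) - 1))
      calc (1 : ℝ) = q * (1 / (d - 1) + 1) := by rw [hq]; field_simp; ring
        _ ≤ _ := mul_le_mul_of_nonneg_left this hq0.le
    have hk1 : 1 ≤ (q * Real.exp (1 / (d - 1))) ^ k := one_le_pow₀ hstep
    rw [mul_pow, ← Real.exp_nat_mul] at hk1
    have : q ^ d = q ^ N.card * q ^ k := by rw [← pow_add, ← hk]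
    rw [this, mul_assoc]
    exact le_mul_of_one_le_right (by positivity) hk1
  have h3 : (d : ℝ) * S - 1 ≤ (d - 1) * Real.exp ((d * S - 1) / (d - 1) - 1) := by
    have := Real.add_one_le_exp (((d : ℝ) * S - 1) / (d - 1) - 1)
    calc (d : ℝ) * S - 1 = (d - 1) * ((d * S - 1) / (d - 1)) := by field_simp
      _ ≤ _ := mul_le_mul_of_nonneg_left (by linarith) hd1.le
  have hsum : ∑ u ∈ N, ((1 - p u) * ((d : ℝ) / (d - 1)) - 1) =
      (N.card - S) * (d / (d - 1)) - N.card := by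
    simp [Finset.sum_sub_distrib, ← Finset.sum_mul, hS]
  calc _ ≤ (q ^ d * Real.exp (k * (1 / (d - 1))) *
        Real.exp (∑ u ∈ N, ((1 - p u) * (d / (d - 1)) - 1))) *
        ((d - 1) * Real.exp ((d * S - 1) / (d - 1) - 1)) := by
        refine mul_le_mul (h1.trans ?_) h3 hpos.le (by positivity)
        exact mul_le_mul_of_nonneg_right h2 (Real.exp_pos _).le
    _ = q ^ d * (d - 1) * Real.exp (k * (1 / (d - 1)) +
        ∑ u ∈ N, ((1 - p u) * (d / (d - 1)) - 1) + ((d * S - 1) / (d - 1) - 1)) := by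
        rw [Real.exp_add, Real.exp_add]; ring
    _ = q ^ d * (d - 1) * Real.exp 0 := by
        congr 2
        rw [hsum, hkd]
        field_simp
        ring
    _ = _ := by rw [Real.exp_zero, hq, div_pow, pow_succ]; field_simp

lemma hcCrit_mul_le {Δ : ℕ} (hΔ : 3 ≤ Δ) : Δ * hcCrit Δ ≤ 18 := by
  obtain ⟨m, rfl⟩ := Nat.exists_eq_add_of_le hΔ
  unfold hcCrit
  set x : ℝ := m + 1 with hx
  have hx1 : 1 ≤ x := by simp [hx]
  have e1 : (((3 + m : ℕ) : ℝ) - 1) = x + 1 := by push_cast; ring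
  have e2 : (((3 + m : ℕ) : ℝ) - 2) = x := by push_cast; ring
  have e3 : ((3 + m : ℕ) : ℝ) = x + 2 := by push_cast; ring
  have hexp : (x + 1) ^ (m + 1) ≤ 3 * x ^ (m + 1) := by
    have h := Real.add_one_le_exp (1 / x)
    have h4 : (1 / x + 1) ^ (m + 1) ≤ Real.exp 1 := by
      calc _ ≤ Real.exp (1 / x) ^ (m + 1) := by gcongr
        _ = Real.exp 1 := by
          rw [← Real.exp_nat_mul]; congr 1; push_cast; rw [← hx]; field_simp
    have h5 : Real.exp 1 ≤ 3 := Real.exp_one_lt_three.le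
    calc (x + 1) ^ (m + 1) = (1 / x + 1) ^ (m + 1) * x ^ (m + 1) := by
          rw [← mul_pow]; congr 1; field_simp; ring
      _ ≤ _ := by gcongr; linarith
  rw [e1, e2, e3, show 3 + m - 1 = m + 1 + 1 by omega, show 3 + m = m + 1 + 2 by omega,
    mul_div_assoc', div_le_iff₀ (by positivity)]
  calc (x + 2) * (x + 1) ^ (m + 1 + 1) = (x + 2) * (x + 1) * (x + 1) ^ (m + 1) := by ring
    _ ≤ ((3 * x) * (2 * x)) * (3 * x ^ (m + 1)) := by gcongr <;> linarith
    _ = _ := by ring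

lemma hcCrit_pos {Δ : ℕ} (hΔ : 3 ≤ Δ) : 0 < hcCrit Δ := by
  have : (3 : ℝ) ≤ Δ := by exact_mod_cast hΔ
  unfold hcCrit
  have h1 : (0 : ℝ) < Δ - 1 := by linarith
  have h2 : (0 : ℝ) < Δ - 2 := by linarith
  positivity

/-- With children occupied with probability `p u` and a parent with odds `y`, the tree recursion
contracts in the metric `1 / √p`, uniformly below `(1 - δ) λ_Δ`. -/
lemma tree_contract {ι : Type*} (N : Finset ι) (p : ι → ℝ) (hp : ∀ u ∈ N, 0 < p u ∧ p u < 1)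
    {Δ : ℕ} (hΔ : 3 ≤ Δ) (hN : N.card ≤ Δ - 1) {δ y : ℝ} (hδ : 0 < δ) (hδ1 : δ < 1)
    (hl : 0 < lam) (hlam : lam ≤ (1 - δ) * hcCrit Δ) (hy : y = lam * ∏ u ∈ N, (1 - p u)) :
    √(y / (1 + y)) * ∑ u ∈ N, √(p u) ≤ 1 - δ / 14 := by
  have hΔ' : (3 : ℝ) ≤ Δ := by exact_mod_cast hΔ
  have hc := hcCrit_pos hΔ
  have hlam6 : lam ≤ 6 := by
    have h18 := hcCrit_mul_le hΔ
    nlinarith [mul_le_mul_of_nonneg_right hΔ' hc.le]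
  have hP0 : 0 < ∏ u ∈ N, (1 - p u) := Finset.prod_pos fun u hu => by linarith [(hp u hu).2]
  have hP1 : ∏ u ∈ N, (1 - p u) ≤ 1 :=
    Finset.prod_le_one (fun u hu => by linarith [(hp u hu).2]) fun u hu => by linarith [(hp u hu).1]
  have hy0 : 0 < y := by rw [hy]; positivity
  have hy6 : y ≤ 6 := by rw [hy]; nlinarith
  obtain ⟨d, rfl⟩ : ∃ d, Δ = d + 1 := ⟨Δ - 1, by omega⟩
  simp only [Nat.add_sub_cancel] at hN
  have hd : 2 ≤ d := by omega
  have hd1 : (0 : ℝ) < d - 1 := by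
    have : (2 : ℝ) ≤ d := by exact_mod_cast hd
    linarith
  have hd0 : (0 : ℝ) < d := by linarith
  have hcrit : hcCrit (d + 1) * (((d : ℝ) - 1) ^ (d + 1) / (d : ℝ) ^ d) = 1 := by
    unfold hcCrit
    rw [show (((d + 1 : ℕ) : ℝ) - 1) = d by push_cast; ring,
      show (((d + 1 : ℕ) : ℝ) - 2) = d - 1 by push_cast; ring, Nat.add_sub_cancel]
    field_simp
  have hmain : y * (d * ∑ u ∈ N, p u - 1) ≤ 1 - δ := by
    have h := prod_mul_le N p hp hd hN
    have hq : 0 ≤ ((d : ℝ) - 1) ^ (d + 1) / (d : ℝ) ^ d := by positivity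
    calc y * (d * ∑ u ∈ N, p u - 1)
        = lam * ((∏ u ∈ N, (1 - p u)) * (d * ∑ u ∈ N, p u - 1)) := by rw [hy]; ring
      _ ≤ lam * (((d : ℝ) - 1) ^ (d + 1) / (d : ℝ) ^ d) := mul_le_mul_of_nonneg_left h hl.le
      _ ≤ (1 - δ) * hcCrit (d + 1) * (((d : ℝ) - 1) ^ (d + 1) / (d : ℝ) ^ d) :=
          mul_le_mul_of_nonneg_right hlam hq
      _ = 1 - δ := by rw [mul_assoc, hcrit, mul_one]
  have hS0 : 0 ≤ ∑ u ∈ N, p u := Finset.sum_nonneg fun u hu => (hp u hu).1.le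
  have hcs : (∑ u ∈ N, √(p u)) ^ 2 ≤ d * ∑ u ∈ N, p u := by
    calc _ ≤ N.card * ∑ u ∈ N, √(p u) ^ 2 := sq_sum_le_card_mul_sum_sq
      _ = N.card * ∑ u ∈ N, p u := by
        rw [Finset.sum_congr rfl fun u hu => Real.sq_sqrt (hp u hu).1.le]
      _ ≤ _ := by gcongr
  apply le_of_sq_le_sq ?_ (by linarith)
  rw [mul_pow, Real.sq_sqrt (by positivity)]
  calc y / (1 + y) * (∑ u ∈ N, √(p u)) ^ 2 ≤ y / (1 + y) * (d * ∑ u ∈ N, p u) := by gcongr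
    _ ≤ 1 - δ / 7 := by
      rw [div_mul_eq_mul_div, div_le_iff₀ (by positivity)]
      nlinarith
    _ ≤ _ := by nlinarith

/-- The common part of the recursion for a root and for an inner vertex of the tree. -/
lemma infl_step (hl : 0 < lam) {κ M : ℝ} {g : Finset V → ℝ} (hg : Lip κ g) {U : Finset V} {v : V}
    (hv : v ∈ U)
    (hH : ∀ H ⊆ U.erase v, ∀ u ∈ nbr G U v, u ∈ H → infl G lam H u g ≤ M / √(occ G lam H u)) :
    ∃ p : V → ℝ, (∀ u ∈ nbr G U v, 0 < p u ∧ p u < 1 ∧ p u ≤ lam) ∧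
      (∀ y, y = lam * ∏ u ∈ nbr G U v, (1 - p u) → occ G lam U v = y / (1 + y)) ∧
      infl G lam U v g ≤ κ + M * ∑ u ∈ nbr G U v, √(p u) := by
  obtain ⟨p, hp, hprod, hbd⟩ := peel hl (nbr G U v) (U.erase v) (Finset.filter_subset _ _) hH
  refine ⟨p, hp, ?_, ?_⟩
  · rintro y rfl
    have h1 := pfun_pos (G := G) hl (U.erase v)
    have h2 := pfun_pos (G := G) hl (rest G U v)
    rw [hprod, occ, pfun_rec hv]
    change _ = lam * (pfun G lam (rest G U v) / _) / (1 + lam * (pfun G lam (rest G U v) / _))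
    field_simp
  · have h1 : |avg G lam (rest G U v) (fun σ => g (insert v σ)) - avg G lam (rest G U v) g| ≤ κ := by
      rw [abs_le]
      constructor
      · have := avg_mono (G := G) hl (rest G U v) (g := fun σ => g σ + (-κ))
          (h := fun σ => g (insert v σ)) fun σ => by linarith [(abs_le.1 (hg σ v)).1]
        rw [avg_add_const hl] at this
        linarith
      · have := avg_mono (G := G) hl (rest G U v) (g := fun σ => g (insert v σ))
          (h := fun σ => g σ + κ) fun σ => by linarith [(abs_le.1 (hg σ v)).2]
        rw [avg_add_const hl] at this
        linarith
    exact (abs_sub_le _ (avg G lam (rest G U v) g) _).trans (add_le_add h1 hbd)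

lemma nbr_card_le [DecidableRel G.Adj] {Δ : ℕ} (hdeg : ∀ v : V, G.degree v ≤ Δ) (U : Finset V)
    (v : V) : (nbr G U v).card ≤ Δ := by
  refine le_trans (Finset.card_le_card fun u hu => ?_) (hdeg v)
  rw [SimpleGraph.mem_neighborFinset]
  exact (mem_nbr.1 hu).2

/-- A vertex with a deleted neighbour has at most `Δ - 1` neighbours left. -/
lemma nbr_card_lt [DecidableRel G.Adj] {Δ : ℕ} (hdeg : ∀ v : V, G.degree v ≤ Δ) {H : Finset V}
    {u v : V} (huv : G.Adj u v) (hv : v ∉ H) : (nbr G H u).card ≤ Δ - 1 := by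
  have h : nbr G H u ⊆ (G.neighborFinset u).erase v := fun w hw => by
    have hw' := mem_nbr.1 hw
    rw [Finset.mem_erase, SimpleGraph.mem_neighborFinset]
    exact ⟨fun h => hv (h ▸ (Finset.mem_erase.1 hw'.1).2), hw'.2⟩
  have h1 := Finset.card_le_card h
  rw [Finset.card_erase_of_mem ((SimpleGraph.mem_neighborFinset _ _ _).2 huv)] at h1
  have h2 := hdeg u
  unfold SimpleGraph.degree at h2
  omega

/-- Inner vertices: `√p · influence` stays below a fixed multiple of `κ √λ`. -/
lemma infl_inner [DecidableRel G.Adj] {Δ : ℕ} (hΔ : 3 ≤ Δ) (hdeg : ∀ v : V, G.degree v ≤ Δ)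
    {δ : ℝ} (hδ : 0 < δ) (hδ1 : δ < 1) (hl : 0 < lam) (hlam : lam ≤ (1 - δ) * hcCrit Δ)
    {κ : ℝ} (hκ : 0 < κ) {g : Finset V → ℝ} (hg : Lip κ g) (n : ℕ) :
    ∀ (U : Finset V) (v : V), U.card = n → v ∈ U → (nbr G U v).card ≤ Δ - 1 →
      infl G lam U v g ≤ (κ * √lam * (14 / δ)) / √(occ G lam U v) := by
  induction n using Nat.strong_induction_on with
  | _ n ih =>
    intro U v hU hv hcard
    obtain ⟨p, hp, hocc, hbd⟩ := infl_step (G := G) hl hg hv (M := κ * √lam * (14 / δ))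
      fun H hHU u hu huH => by
        refine ih H.card ?_ H u rfl huH (nbr_card_lt hdeg (v := v) ?_ ?_)
        · have h1 := Finset.card_le_card hHU
          have h2 := Finset.card_erase_lt_of_mem hv
          omega
        · exact (mem_nbr.1 hu).2.symm
        · exact fun h => Finset.notMem_erase v U (hHU h)
    have hc := tree_contract (nbr G U v) p (fun u hu => ⟨(hp u hu).1, (hp u hu).2.1⟩) hΔ hcard
      hδ hδ1 hl hlam rfl
    rw [← hocc _ rfl] at hc
    have h0 := Real.sqrt_pos.2 (occ_pos (G := G) hl U v)
    have h1 : √(occ G lam U v) ≤ √lam := Real.sqrt_le_sqrt (occ_le hl U v)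
    rw [le_div_iff₀ h0]
    calc infl G lam U v g * √(occ G lam U v)
        ≤ (κ + κ * √lam * (14 / δ) * ∑ u ∈ nbr G U v, √(p u)) * √(occ G lam U v) := by gcongr
      _ = κ * √(occ G lam U v) +
          κ * √lam * (14 / δ) * (√(occ G lam U v) * ∑ u ∈ nbr G U v, √(p u)) := by ring
      _ ≤ κ * √lam + κ * √lam * (14 / δ) * (1 - δ / 14) := by gcongr
      _ = _ := by field_simp; ring

/-- Influences are bounded by a constant depending on `δ` only. -/
lemma infl_le [DecidableRel G.Adj] {Δ : ℕ} (hΔ : 3 ≤ Δ) (hdeg : ∀ v : V, G.degree v ≤ Δ)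
    {δ : ℝ} (hδ : 0 < δ) (hδ1 : δ < 1) (hl : 0 < lam) (hlam : lam ≤ (1 - δ) * hcCrit Δ)
    {κ : ℝ} (hκ : 0 < κ) {g : Finset V → ℝ} (hg : Lip κ g) {U : Finset V} {v : V} (hv : v ∈ U) :
    infl G lam U v g ≤ κ * (1 + 252 / δ) := by
  obtain ⟨p, hp, -, hbd⟩ := infl_step (G := G) hl hg hv (M := κ * √lam * (14 / δ))
    fun H hHU u hu huH => infl_inner hΔ hdeg hδ hδ1 hl hlam hκ hg H.card H u rfl huH
      (nbr_card_lt hdeg (v := v) (mem_nbr.1 hu).2.symm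
        fun h => Finset.notMem_erase v U (hHU h))
  have hs : ∑ u ∈ nbr G U v, √(p u) ≤ Δ * √lam := by
    calc _ ≤ ∑ u ∈ nbr G U v, √lam :=
          Finset.sum_le_sum fun u hu => Real.sqrt_le_sqrt (hp u hu).2.2
      _ = (nbr G U v).card * √lam := by simp
      _ ≤ _ := by gcongr; exact nbr_card_le hdeg U v
  have h18 : Δ * lam ≤ 18 := by
    have h1 := hcCrit_mul_le hΔ
    have h2 := hcCrit_pos hΔ
    have h3 : lam ≤ hcCrit Δ := by nlinarith
    exact (mul_le_mul_of_nonneg_left h3 (Nat.cast_nonneg Δ)).trans h1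
  calc infl G lam U v g ≤ κ + κ * √lam * (14 / δ) * (Δ * √lam) := by
        refine hbd.trans ?_
        gcongr
    _ = κ * (1 + 14 / δ * (Δ * (√lam * √lam))) := by ring
    _ = κ * (1 + 14 / δ * (Δ * lam)) := by rw [Real.mul_self_sqrt hl.le]
    _ ≤ κ * (1 + 14 / δ * 18) := by gcongr
    _ = _ := by ring

/-! ### Moment generating function -/

/-- Two-point version of the moment bound. -/
lemma two_point {p a b : ℝ} (hp : 0 ≤ p) (hab : |a - b| ≤ 1) :
    (1 - p) * Real.exp b + p * Real.exp a ≤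
      Real.exp ((1 - p) * b + p * a + p * (a - b) ^ 2) := by
  have h1 : Real.exp (a - b) ≤ 1 + (a - b) + (a - b) ^ 2 := by
    have := (abs_le.1 (Real.abs_exp_sub_one_sub_id_le hab)).2
    linarith
  calc (1 - p) * Real.exp b + p * Real.exp a
      = Real.exp b * (1 + p * (Real.exp (a - b) - 1)) := by
        rw [Real.exp_sub]; field_simp; ring
    _ ≤ Real.exp b * (p * ((a - b) + (a - b) ^ 2) + 1) := by
        refine mul_le_mul_of_nonneg_left ?_ (Real.exp_pos _).le
        nlinarith
    _ ≤ Real.exp b * Real.exp (p * ((a - b) + (a - b) ^ 2)) := by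
        gcongr; exact Real.add_one_le_exp _
    _ = _ := by rw [← Real.exp_add]; congr 1; ring

/-- Revealing one vertex at a time costs at most `λ (s K κ)²` per vertex. -/
lemma mgf_le [DecidableRel G.Adj] {Δ : ℕ} (hΔ : 3 ≤ Δ) (hdeg : ∀ v : V, G.degree v ≤ Δ)
    {δ : ℝ} (hδ : 0 < δ) (hδ1 : δ < 1) (hl : 0 < lam) (hlam : lam ≤ (1 - δ) * hcCrit Δ)
    {κ : ℝ} (hκ : 0 < κ) {s : ℝ} (hs : |s| * (κ * (1 + 252 / δ)) ≤ 1) (n : ℕ) :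
    ∀ (U : Finset V) (g : Finset V → ℝ), U.card = n → Lip κ g →
      avg G lam U (fun σ => Real.exp (s * g σ)) ≤
        Real.exp (s * avg G lam U g + lam * (s * (κ * (1 + 252 / δ))) ^ 2 * n) := by
  induction n using Nat.strong_induction_on with
  | _ n ih =>
    intro U g hU hg
    rcases U.eq_empty_or_nonempty with rfl | ⟨v, hv⟩
    · rw [avg_empty, avg_empty]
      apply Real.exp_le_exp.2
      have : 0 ≤ lam * (s * (κ * (1 + 252 / δ))) ^ 2 * n := by positivity
      linarith
    have hn : 1 ≤ n := hU ▸ Finset.card_pos.2 ⟨v, hv⟩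
    set K := κ * (1 + 252 / δ) with hK
    set A := lam * (s * K) ^ 2 with hA
    have hA0 : 0 ≤ A := by positivity
    have hp0 := occ_pos (G := G) hl U v
    have hp1 := occ_lt_one (G := G) hl hv
    have hpl := occ_le (G := G) hl U v
    have hmono : ∀ m : ℕ, m < n → A * m ≤ A * (n - 1) := fun m hm => by
      have : (m : ℝ) + 1 ≤ n := by exact_mod_cast hm
      gcongr; linarith
    have hc1 : (U.erase v).card < n := hU ▸ Finset.card_erase_lt_of_mem hv
    have hc2 : (rest G U v).card < n := (Finset.card_le_card (rest_subset U v)).trans_lt hc1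
    set b := avg G lam (U.erase v) g with hb
    set a := avg G lam (rest G U v) (fun σ => g (insert v σ)) with ha
    have h1 : avg G lam (U.erase v) (fun σ => Real.exp (s * g σ)) ≤
        Real.exp (A * (n - 1)) * Real.exp (s * b) := by
      rw [← Real.exp_add]
      refine (ih _ hc1 _ g rfl hg).trans (Real.exp_le_exp.2 ?_)
      linarith [hmono _ hc1]
    have h2 : avg G lam (rest G U v) (fun σ => Real.exp (s * g (insert v σ))) ≤
        Real.exp (A * (n - 1)) * Real.exp (s * a) := by
      rw [← Real.exp_add]
      refine (ih _ hc2 _ _ rfl (hg.comp_insert v)).trans (Real.exp_le_exp.2 ?_)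
      linarith [hmono _ hc2]
    have hinf : |a - b| ≤ K := infl_le hΔ hdeg hδ hδ1 hl hlam hκ hg hv
    have hsab : |s * a - s * b| ≤ |s| * K := by
      rw [← mul_sub, abs_mul]; gcongr
    have hsq : (s * a - s * b) ^ 2 ≤ (s * K) ^ 2 := by
      apply sq_le_sq.2
      rw [abs_mul s K]
      exact hsab.trans (by gcongr; exact le_abs_self K)
    rw [avg_rec hl hv, avg_rec hl hv g]
    calc _ ≤ (1 - occ G lam U v) * (Real.exp (A * (n - 1)) * Real.exp (s * b)) +
          occ G lam U v * (Real.exp (A * (n - 1)) * Real.exp (s * a)) :=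
          add_le_add (mul_le_mul_of_nonneg_left h1 (by linarith))
            (mul_le_mul_of_nonneg_left h2 hp0.le)
      _ = Real.exp (A * (n - 1)) * ((1 - occ G lam U v) * Real.exp (s * b) +
          occ G lam U v * Real.exp (s * a)) := by ring
      _ ≤ Real.exp (A * (n - 1)) * Real.exp ((1 - occ G lam U v) * (s * b) +
          occ G lam U v * (s * a) + occ G lam U v * (s * a - s * b) ^ 2) :=
          mul_le_mul_of_nonneg_left (two_point hp0.le (hsab.trans hs)) (Real.exp_pos _).le
      _ ≤ _ := by
          rw [← Real.exp_add]
          apply Real.exp_le_exp.2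
          have : occ G lam U v * (s * a - s * b) ^ 2 ≤ A :=
            mul_le_mul hpl hsq (sq_nonneg _) hl.le
          linarith

lemma avg_univ (g : Finset V → ℝ) :
    avg G lam univ g = expect (hardcore G (fun _ => lam)) g := by
  simp only [avg, wsum, pfun, _root_.expect, hardcore, Finset.powerset_univ, mul_one, Finset.sum_div]
  exact Finset.sum_congr rfl fun _ _ => by ring

lemma hardcore_nonneg (hl : 0 < lam) (σ : Finset V) : 0 ≤ hardcore G (fun _ => lam) σ :=
  div_nonneg (hcWeight_nonneg G hl σ) (Finset.sum_nonneg fun τ _ => hcWeight_nonneg G hl τ)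

/-- Markov's inequality in the form used for both tails. -/
lemma tail_le (hl : 0 < lam) (P : Finset V → Prop) (h : Finset V → ℝ) (h0 : ∀ σ, 0 ≤ h σ)
    (h1 : ∀ σ, P σ → 1 ≤ h σ) :
    ∑ σ ∈ univ.filter P, hardcore G (fun _ => lam) σ ≤ avg G lam univ h := by
  rw [avg_univ, _root_.expect, Finset.sum_filter]
  refine Finset.sum_le_sum fun σ _ => ?_
  have := hardcore_nonneg (G := G) hl σ
  split_ifs with hP
  · exact le_mul_of_one_le_right this (h1 σ hP)
  · exact mul_nonneg this (h0 σ)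

/-- Chernoff bounds with a free parameter `s`. -/
lemma chernoff [DecidableRel G.Adj] {Δ : ℕ} (hΔ : 3 ≤ Δ) (hdeg : ∀ v : V, G.degree v ≤ Δ)
    {δ : ℝ} (hδ : 0 < δ) (hδ1 : δ < 1) (hl : 0 < lam) (hlam : lam ≤ (1 - δ) * hcCrit Δ)
    {κ : ℝ} (hκ : 0 < κ) {f : Finset V → ℝ} (hf : Lip κ f) {s : ℝ} (hs0 : 0 ≤ s)
    (hs : s * (κ * (1 + 252 / δ)) ≤ 1) (t : ℝ) :
    upperTail (hardcore G (fun _ => lam)) f t ≤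
        Real.exp (lam * (s * (κ * (1 + 252 / δ))) ^ 2 * Fintype.card V - s * t) ∧
      lowerTail (hardcore G (fun _ => lam)) f t ≤
        Real.exp (lam * (s * (κ * (1 + 252 / δ))) ^ 2 * Fintype.card V - s * t) := by
  have key : ∀ r c : ℝ, |r| * (κ * (1 + 252 / δ)) ≤ 1 → ∀ P : Finset V → Prop,
      (∀ σ, P σ → 0 ≤ r * f σ + c) →
      ∑ σ ∈ univ.filter P, hardcore G (fun _ => lam) σ ≤ Real.exp (r * expect
        (hardcore G (fun _ => lam)) f + lam * (r * (κ * (1 + 252 / δ))) ^ 2 * Fintype.card V + c) := by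
    intro r c hr P hP
    have h1 := tail_le (G := G) hl P (fun σ => Real.exp (r * f σ) * Real.exp c)
      (fun σ => by positivity) fun σ hσ => by
        rw [← Real.exp_add]; exact Real.one_le_exp (hP σ hσ)
    have h2 := mgf_le (G := G) hΔ hdeg hδ hδ1 hl hlam hκ hr _ univ f rfl hf
    have h3 : avg G lam univ (fun σ => Real.exp (r * f σ) * Real.exp c) =
        avg G lam univ (fun σ => Real.exp (r * f σ)) * Real.exp c := by
      simp only [avg, wsum, ← mul_assoc, ← Finset.sum_mul]
      ring
    rw [h3] at h1
    rw [avg_univ f, Finset.card_univ] at h2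
    rw [Real.exp_add]
    exact h1.trans (mul_le_mul_of_nonneg_right h2 (Real.exp_pos _).le)
  constructor
  · have h := key s (-(s * (expect (hardcore G (fun _ => lam)) f + t)))
      (by rwa [abs_of_nonneg hs0]) (fun σ => expect (hardcore G (fun _ => lam)) f + t < f σ)
      fun σ hσ => by nlinarith
    unfold upperTail
    convert h using 2
    ring
  · have h := key (-s) (s * (expect (hardcore G (fun _ => lam)) f - t))
      (by rwa [abs_neg, abs_of_nonneg hs0])
      (fun σ => f σ < expect (hardcore G (fun _ => lam)) f - t)
      fun σ hσ => by nlinarith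
    unfold lowerTail
    convert h using 2
    ring

end

/-- Bernstein-type concentration for increasing `κ`-Lipschitz
functions of the hardcore model at fugacity `λ ≤ (1−δ)·λ_Δ`: a sub-Gaussian
regime (a) for moderate deviations and a subexponential regime (b) for all `t ≥ 0`. -/
theorem hardcore_monotone_concentration :
    ∀ δ : ℝ, δ ∈ Set.Ioo (0 : ℝ) 1 →
    ∃ c C : ℝ, 0 < c ∧ 0 < C ∧
      ∀ (V : Type) [Fintype V] [DecidableEq V] (G : SimpleGraph V)
        [DecidableRel G.Adj] (Δ : ℕ), 3 ≤ Δ →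
        (∀ v : V, G.degree v ≤ Δ) →
        ∀ lam : ℝ, 0 < lam → lam ≤ (1 - δ) * hcCrit Δ →
          ∀ (κ : ℝ) (f : Finset V → ℝ), 0 < κ →
            (∀ (σ : Finset V) (v : V), v ∉ σ →
              0 ≤ f (insert v σ) - f σ ∧ f (insert v σ) - f σ ≤ κ) →
            (∀ t : ℝ, 0 ≤ t → t ≤ C * lam * κ * Fintype.card V →
              upperTail (hardcore G (fun _ => lam)) f t ≤
                Real.exp (-(c * t ^ 2) / (lam * κ ^ 2 * Fintype.card V)) ∧
              lowerTail (hardcore G (fun _ => lam)) f t ≤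
                Real.exp (-(c * t ^ 2) / (lam * κ ^ 2 * Fintype.card V))) ∧
            (∀ t : ℝ, 0 ≤ t →
              upperTail (hardcore G (fun _ => lam)) f t ≤
                Real.exp (C * lam * Fintype.card V) * Real.exp (-(c * t) / κ) ∧
              lowerTail (hardcore G (fun _ => lam)) f t ≤
                Real.exp (C * lam * Fintype.card V) * Real.exp (-(c * t) / κ)) := by
  intro δ hδ
  obtain ⟨hδ0, hδ1⟩ := hδ
  set K : ℝ := 1 + 252 / δ with hK
  have hK1 : 1 ≤ K := by
    have : 0 ≤ 252 / δ := by positivity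
    linarith
  have hK0 : 0 < K := by linarith
  -- The free parameter `s = t / (2 λ κ² K² n)` is optimal for (a); it is admissible exactly when
  -- `t ≤ 2 K λ κ n`. For (b) the largest admissible value `s = 1 / (K κ)` is used.
  refine ⟨1 / (4 * K ^ 2), 2 * K, by positivity, by positivity, ?_⟩
  intro V _ _ G _ Δ hΔ hdeg lam hl hlam κ f hκ hf
  have hLip : Lip κ f := by
    intro σ v
    by_cases hv : v ∈ σ
    · rw [Finset.insert_eq_of_mem hv, sub_self, abs_zero]; exact hκ.le
    · obtain ⟨h1, h2⟩ := hf σ v hv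
      rwa [abs_of_nonneg h1]
  constructor
  · intro t ht htC
    rcases Nat.eq_zero_or_pos (Fintype.card V) with hn | hn
    -- Without vertices, division by zero makes the right-hand side `exp 0`, so `s = 0` suffices.
    · have h := chernoff (G := G) hΔ hdeg hδ0 hδ1 hl hlam hκ hLip le_rfl (by simp) t
      simpa [hn] using h
    · have hn' : (0 : ℝ) < Fintype.card V := by exact_mod_cast hn
      set n : ℝ := (Fintype.card V : ℝ) with hnn
      have h := chernoff (G := G) hΔ hdeg hδ0 hδ1 hl hlam hκ hLip
        (s := t / (2 * lam * κ ^ 2 * K ^ 2 * n)) (by positivity) (by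
          rw [← hK, div_mul_eq_mul_div, div_le_one (by positivity)]
          calc t * (κ * K) ≤ 2 * K * lam * κ * n * (κ * K) := by gcongr
            _ = _ := by ring) t
      have he : lam * (t / (2 * lam * κ ^ 2 * K ^ 2 * n) * (κ * K)) ^ 2 * n -
          t / (2 * lam * κ ^ 2 * K ^ 2 * n) * t =
          -(1 / (4 * K ^ 2) * t ^ 2) / (lam * κ ^ 2 * n) := by
        field_simp
        ring
      rw [← hK, ← hnn, he] at h
      exact h
  · intro t ht
    have h := chernoff (G := G) hΔ hdeg hδ0 hδ1 hl hlam hκ hLip (s := 1 / (κ * K))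
      (by positivity) (by rw [← hK]; field_simp; exact le_rfl) t
    rw [← hK] at h
    have he : Real.exp (lam * (1 / (κ * K) * (κ * K)) ^ 2 * Fintype.card V - 1 / (κ * K) * t) ≤
        Real.exp (2 * K * lam * Fintype.card V) * Real.exp (-(1 / (4 * K ^ 2) * t) / κ) := by
      rw [← Real.exp_add]
      apply Real.exp_le_exp.2
      have e1 : 1 / (κ * K) * (κ * K) = 1 := by field_simp
      have e2 : 1 / (4 * K ^ 2) * t / κ ≤ 1 / (κ * K) * t := by
        have : 1 / (4 * K ^ 2 * κ) ≤ 1 / (κ * K) := by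
          apply one_div_le_one_div_of_le (by positivity)
          nlinarith [mul_pos hκ hK0]
        calc 1 / (4 * K ^ 2) * t / κ = 1 / (4 * K ^ 2 * κ) * t := by field_simp
          _ ≤ _ := mul_le_mul_of_nonneg_right this ht
      have e3 : lam * Fintype.card V ≤ 2 * K * lam * Fintype.card V := by
        have : (0 : ℝ) ≤ lam * Fintype.card V := by positivity
        nlinarith
      rw [e1, neg_div]
      linarith
    exact ⟨h.1.trans he, h.2.trans he⟩
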